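/- For every nonnegative integer n, there exists an RDSQS(3·7^n + 1), i.e., a Steiner quadruple system SQS(3·7^n + 1) whose derived design at every point is resolvable. -/

import Mathlib

open Finset

/-- A parallel class on point set `Y`: a collection of blocks that partitions `Y`. -/
def IsParallelClass (Y : Finset ℕ) (P : Finset (Finset ℕ)) : Prop :=
  (∀ b ∈ P, b ⊆ Y) ∧ ∀ y ∈ Y, ∃! b, b ∈ P ∧ y ∈ b

/-- A block collection `B` on point set `Y` is resolvable if it can be partitioned
into parallel classes of `Y`. -/
def Resolvable (Y : Finset ℕ) (B : Finset (Finset ℕ)) : Prop :=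
  ∃ (r : ℕ) (P : Fin r → Finset (Finset ℕ)),
    (∀ i, IsParallelClass Y (P i)) ∧ (∀ i, P i ⊆ B) ∧ ∀ b ∈ B, ∃! i, b ∈ P i

/-- The blocks of the derived design at a point `x`:
`{B \ {x} : x ∈ B, B ∈ B}`. -/
def derivedBlocks (B : Finset (Finset ℕ)) (x : ℕ) : Finset (Finset ℕ) :=
  (B.filter fun b => x ∈ b).image fun b => b.erase x

/-- A Steiner system S(t, k, v) on point set `X` with block collection `B`. -/
def IsSteiner (t k v : ℕ) (X : Finset ℕ) (B : Finset (Finset ℕ)) : Prop :=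
  X.card = v ∧ (∀ b ∈ B, b ⊆ X ∧ b.card = k) ∧
  ∀ T ⊆ X, T.card = t → ∃! b, b ∈ B ∧ T ⊆ b

/-- An RDS(t, k, v): a Steiner system S(t, k, v) whose derived design at every
point is resolvable. -/
def IsRDS (t k v : ℕ) (X : Finset ℕ) (B : Finset (Finset ℕ)) : Prop :=
  IsSteiner t k v X B ∧ ∀ x ∈ X, Resolvable (X.erase x) (derivedBlocks B x)

/-- Existence of an RDS(t, k, v). -/
def ExistsRDS (t k v : ℕ) : Prop := ∃ X B, IsRDS t k v X B

/-- Existence of an RDSQS(v), i.e. an RDS(3, 4, v). -/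
def ExistsRDSQS (v : ℕ) : Prop := ExistsRDS 3 4 v

/-- A Kirkman triple system KTS(v): a resolvable Steiner triple system. -/
def IsKTS (v : ℕ) (X : Finset ℕ) (B : Finset (Finset ℕ)) : Prop :=
  IsSteiner 2 3 v X B ∧ Resolvable X B

/-- Existence of a large set of Kirkman triple systems LKTS(v): a partition of
all 3-element subsets of a v-element set into v - 2 classes, each a KTS(v). -/
def ExistsLKTS (v : ℕ) : Prop :=
  ∃ (X : Finset ℕ) (C : Fin (v - 2) → Finset (Finset ℕ)),
    X.card = v ∧ (∀ i, IsKTS v X (C i)) ∧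
    (∀ T : Finset ℕ, (T ⊆ X ∧ T.card = 3) ↔ ∃ i, T ∈ C i) ∧
    ∀ (T : Finset ℕ) (i j : Fin (v - 2)), T ∈ C i → T ∈ C j → i = j

/-- A t-wise balanced design S(t, K, v) with block sizes from the set `K`. -/
def IsTBD (t : ℕ) (K : Set ℕ) (v : ℕ) (X : Finset ℕ) (B : Finset (Finset ℕ)) : Prop :=
  X.card = v ∧ (∀ b ∈ B, b ⊆ X ∧ b.card ∈ K) ∧
  ∀ T ⊆ X, T.card = t → ∃! b, b ∈ B ∧ T ⊆ b

/-- A group divisible design GDD(t, K, g*n) of type g^n: `Gs` is a partition of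
`X` into `n` groups of size `g`; blocks have sizes in `K`, meet every group in
at most one point, and every t-subset of `X` meeting every group in at most one
point lies in exactly one block. -/
def IsGDD (t : ℕ) (K : Set ℕ) (g n : ℕ) (X : Finset ℕ)
    (Gs Bs : Finset (Finset ℕ)) : Prop :=
  X.card = g * n ∧ Gs.card = n ∧
  (∀ G ∈ Gs, G ⊆ X ∧ G.card = g) ∧
  (∀ x ∈ X, ∃! G, G ∈ Gs ∧ x ∈ G) ∧
  (∀ b ∈ Bs, b ⊆ X ∧ b.card ∈ K) ∧
  (∀ b ∈ Bs, ∀ G ∈ Gs, (b ∩ G).card ≤ 1) ∧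
  ∀ T ⊆ X, T.card = t → (∀ G ∈ Gs, (T ∩ G).card ≤ 1) → ∃! b, b ∈ Bs ∧ T ⊆ b

/-- An RDGDD(t, K, g*n) of type g^n: a GDD whose derived design at every point
(on point set `X \ G`, where `G` is the group of the point) is resolvable. -/
def IsRDGDD (t : ℕ) (K : Set ℕ) (g n : ℕ) (X : Finset ℕ)
    (Gs Bs : Finset (Finset ℕ)) : Prop :=
  IsGDD t K g n X Gs Bs ∧
  ∀ x ∈ X, ∀ G ∈ Gs, x ∈ G → Resolvable (X \ G) (derivedBlocks Bs x)

/-- An RDSQS*(v): an SQS(v) with v ≡ 1 (mod 3) such that, for every point `x`,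
the derived blocks at `x` contain a parallel class `P'` (enumerated by `Bk`);
the multiset consisting of each triple of `P'` three times and each remaining
derived triple twice can be partitioned into (v-1) parallel classes
`P k l` (k ranging over Fin ((v-1)/3), l over Fin 3); and for each `k` the three
parallel classes `P k l` share the common triple `Bk k`. -/
def IsRDSQSstar (v : ℕ) (X : Finset ℕ) (B : Finset (Finset ℕ)) : Prop :=
  IsSteiner 3 4 v X B ∧ v % 3 = 1 ∧
  ∀ x ∈ X, ∃ (P' : Finset (Finset ℕ)) (Bk : Fin ((v - 1) / 3) → Finset ℕ)
    (P : Fin ((v - 1) / 3) → Fin 3 → Finset (Finset ℕ)),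
    P' ⊆ derivedBlocks B x ∧
    IsParallelClass (X.erase x) P' ∧
    (∀ k, Bk k ∈ P') ∧
    (∀ b ∈ P', ∃ k, Bk k = b) ∧
    Function.Injective Bk ∧
    (∀ k l, IsParallelClass (X.erase x) (P k l)) ∧
    ((∑ k, ∑ l, (P k l).val) =
        3 • P'.val + 2 • ((derivedBlocks B x) \ P').val) ∧
    ∀ k l, Bk k ∈ P k l

/-!
Over `F = 𝔽_(7ⁿ)`, the images of the projective line over `𝔽₇` under the projective group form an
RDS(3, 8, 7ⁿ + 1) on `{∞} ∪ F`: the derived design at `∞` consists of the cosets of the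
one-dimensional `𝔽₇`-subspaces, and each subspace gives a parallel class.

Replace every point `a ≠ ∞` by a group `{a} × W` of three points and keep `∞`. Each group completed
by `∞` becomes a block. A triple not inside such a block spans three points of `{∞} ∪ F`, where two
points in the same group also span `∞`, hence lies over a unique circle. It therefore suffices to
fill every circle with blocks covering once the triples over it: for a circle through `∞` this is an
SQS(22) containing its seven completed groups, and otherwise a group divisible design of type `3⁸`.
If the blocks of every filling through a point are coloured compatibly with nine colours, and one
more colour for the blocks that complete the class of the completed groups, the parallel classes of
the circles combine with the colours to a resolution of the whole.
-/

section TypeLevelDesigns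

variable {α ι : Type*}

/-- A resolution of the derived design at `x` of the block set `B`. The classes `P i` consist of
the blocks themselves, with the point `x` left in place. -/
structure IsResolutionAt (B : Set (Finset α)) (x : α) (P : ι → Set (Finset α)) : Prop where
  exists_mem_iff : ∀ b, (∃ i, b ∈ P i) ↔ b ∈ B ∧ x ∈ b
  index_unique : ∀ b i j, b ∈ P i → b ∈ P j → i = j
  existsUnique_mem : ∀ i, ∀ y ≠ x, ∃! b, b ∈ P i ∧ y ∈ b

/-- An RDS(t, k, v) on the points of a type: the analogue of `IsRDS` for block sets on an
arbitrary point type instead of a finite set of natural numbers. -/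
structure IsRDSOn (t k : ℕ) (B : Set (Finset α)) : Prop where
  card_eq : ∀ b ∈ B, #b = k
  existsUnique_block : ∀ T : Finset α, #T = t → ∃! b, b ∈ B ∧ T ⊆ b
  resolvable : ∀ x, ∃ (r : ℕ) (P : Fin r → Set (Finset α)), IsResolutionAt B x P

theorem IsResolutionAt.exists_fin [Finite ι] {B : Set (Finset α)} {x : α}
    {P : ι → Set (Finset α)} (h : IsResolutionAt B x P) :
    ∃ (r : ℕ) (Q : Fin r → Set (Finset α)), IsResolutionAt B x Q := by
  let e := Finite.equivFin ι
  refine ⟨_, P ∘ e.symm, fun b => ?_, fun b i j hi hj => ?_, fun i => h.existsUnique_mem _⟩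
  · rw [← h.exists_mem_iff, e.symm.surjective.exists]
    rfl
  · exact e.symm.injective (h.index_unique b _ _ hi hj)

theorem eq_of_map_erase_eq {e : α ↪ ℕ} {x : α} {b c : Finset α} (hb : x ∈ b) (hc : x ∈ c)
    (h : (b.map e).erase (e x) = (c.map e).erase (e x)) : b = c := by
  refine map_injective e ?_
  rw [← insert_erase (mem_map_of_mem e hb), h, insert_erase (mem_map_of_mem e hc)]

variable [Fintype α]

open Classical in
/-- The finite family of images of the blocks of `B` under `e`. -/
noncomputable def imageBlocks (e : α ↪ ℕ) (B : Set (Finset α)) : Finset (Finset ℕ) :=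
  B.toFinset.image (Finset.map e)

theorem mem_imageBlocks {e : α ↪ ℕ} {B : Set (Finset α)} {b' : Finset ℕ} :
    b' ∈ imageBlocks e B ↔ ∃ b ∈ B, b.map e = b' := by
  simp [imageBlocks]

theorem IsRDSOn.isSteiner_image {t k : ℕ} {B : Set (Finset α)} (h : IsRDSOn t k B) (e : α ↪ ℕ) :
    IsSteiner t k (Fintype.card α) (univ.map e) (imageBlocks e B) := by
  refine ⟨by simp, fun b' hb' => ?_, fun T' hT' hcard => ?_⟩
  · obtain ⟨b, hb, rfl⟩ := mem_imageBlocks.1 hb'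
    exact ⟨map_subset_map.2 (subset_univ b), by rw [card_map, h.card_eq b hb]⟩
  · obtain ⟨T, -, rfl⟩ := subset_map_iff.1 hT'
    rw [card_map] at hcard
    obtain ⟨b, ⟨hb, hTb⟩, hunique⟩ := h.existsUnique_block T hcard
    refine ⟨b.map e, ⟨mem_imageBlocks.2 ⟨b, hb, rfl⟩, map_subset_map.2 hTb⟩, ?_⟩
    rintro _ ⟨hc, hTc⟩
    obtain ⟨c, hcB, rfl⟩ := mem_imageBlocks.1 hc
    rw [hunique c ⟨hcB, map_subset_map.1 hTc⟩]

theorem mem_derivedBlocks_imageBlocks {e : α ↪ ℕ} {B : Set (Finset α)} {x : α} {d : Finset ℕ} :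
    d ∈ derivedBlocks (imageBlocks e B) (e x) ↔ ∃ b ∈ B, x ∈ b ∧ (b.map e).erase (e x) = d := by
  simp only [derivedBlocks, mem_image, mem_filter, mem_imageBlocks]
  constructor
  · rintro ⟨_, ⟨⟨b, hb, rfl⟩, hx⟩, rfl⟩
    exact ⟨b, hb, (mem_map' e).1 hx, rfl⟩
  · rintro ⟨b, hb, hx, rfl⟩
    exact ⟨_, ⟨⟨b, hb, rfl⟩, (mem_map' e).2 hx⟩, rfl⟩

theorem IsResolutionAt.resolvable_image {B : Set (Finset α)} {x : α} {r : ℕ}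
    {P : Fin r → Set (Finset α)} (h : IsResolutionAt B x P) (e : α ↪ ℕ) :
    Resolvable ((univ.map e).erase (e x)) (derivedBlocks (imageBlocks e B) (e x)) := by
  have mem_of_class {i b} (hb : b ∈ P i) : b ∈ B ∧ x ∈ b := (h.exists_mem_iff b).1 ⟨i, hb⟩
  have mem_class {i d} : d ∈ derivedBlocks (imageBlocks e (P i)) (e x) ↔
      ∃ b ∈ P i, (b.map e).erase (e x) = d := by
    rw [mem_derivedBlocks_imageBlocks]
    exact ⟨fun ⟨b, hb, _, hd⟩ => ⟨b, hb, hd⟩, fun ⟨b, hb, hd⟩ => ⟨b, hb, (mem_of_class hb).2, hd⟩⟩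
  refine ⟨r, fun i => derivedBlocks (imageBlocks e (P i)) (e x), fun i => ⟨fun d hd => ?_,
    fun y' hy' => ?_⟩, fun i d hd => ?_, fun d hd => ?_⟩
  · obtain ⟨b, -, rfl⟩ := mem_class.1 hd
    exact erase_subset_erase _ (map_subset_map.2 (subset_univ b))
  · obtain ⟨hyx, hy'⟩ := mem_erase.1 hy'
    obtain ⟨y, -, rfl⟩ := mem_map.1 hy'
    obtain ⟨b, ⟨hb, hyb⟩, hunique⟩ := h.existsUnique_mem i y fun hy => hyx (congrArg e hy)
    refine ⟨_, ⟨mem_class.2 ⟨b, hb, rfl⟩, mem_erase.2 ⟨hyx, mem_map_of_mem e hyb⟩⟩, ?_⟩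
    rintro _ ⟨hd, hyd⟩
    obtain ⟨c, hc, rfl⟩ := mem_class.1 hd
    rw [hunique c ⟨hc, (mem_map' e).1 (mem_of_mem_erase hyd)⟩]
  · obtain ⟨b, hb, rfl⟩ := mem_class.1 hd
    obtain ⟨hbB, hxb⟩ := mem_of_class hb
    exact mem_derivedBlocks_imageBlocks.2 ⟨b, hbB, hxb, rfl⟩
  · obtain ⟨b, hbB, hxb, rfl⟩ := mem_derivedBlocks_imageBlocks.1 hd
    obtain ⟨i, hi⟩ := (h.exists_mem_iff b).2 ⟨hbB, hxb⟩
    refine ⟨i, mem_class.2 ⟨b, hi, rfl⟩, fun j hj => ?_⟩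
    obtain ⟨c, hc, hcb⟩ := mem_class.1 hj
    obtain rfl := eq_of_map_erase_eq (mem_of_class hc).2 hxb hcb
    exact h.index_unique _ j i hc hi

theorem IsRDSOn.existsRDS {t k : ℕ} {B : Set (Finset α)} (h : IsRDSOn t k B) :
    ExistsRDS t k (Fintype.card α) := by
  let e : α ↪ ℕ := (Fintype.equivFin α).toEmbedding.trans Fin.valEmbedding
  refine ⟨univ.map e, imageBlocks e B, h.isSteiner_image e, fun x' hx' => ?_⟩
  obtain ⟨x, -, rfl⟩ := mem_map.1 hx'
  obtain ⟨r, P, hP⟩ := h.resolvable x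
  exact hP.resolvable_image e

end TypeLevelDesigns

section Circles

open OnePoint Matrix
open scoped Pointwise

theorem IsResolutionAt.of_smul {G α ι : Type*} [Group G] [MulAction G α] [DecidableEq α]
    {B : Set (Finset α)} {g : G} {x : α} {P : ι → Set (Finset α)}
    (hB : ∀ b : Finset α, g • b ∈ B ↔ b ∈ B) (h : IsResolutionAt B (g • x) P) :
    IsResolutionAt B x fun i => {b | g • b ∈ P i} where
  exists_mem_iff b := by
    rw [← hB, ← smul_mem_smul_finset_iff g]
    exact h.exists_mem_iff (g • b)
  index_unique b i j hi hj := h.index_unique (g • b) i j hi hj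
  existsUnique_mem i y hy := by
    obtain ⟨b, ⟨hb, hyb⟩, hunique⟩ := h.existsUnique_mem i (g • y) ((MulAction.injective g).ne hy)
    refine ⟨g⁻¹ • b, ⟨by simpa using hb, mem_inv_smul_finset_iff.2 hyb⟩, fun c hc => ?_⟩
    exact eq_inv_smul_iff.2 (hunique _ ⟨hc.1, (smul_mem_smul_finset_iff g).2 hc.2⟩)

variable {A : Type*} [AddCommGroup A]

/-- The coset of `D` through `b`, completed by the point at infinity. -/
def completedCoset (D : AddSubgroup A) (b : A) : Set (OnePoint A) :=
  insert ∞ ((↑) '' {x : A | x - b ∈ D})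

theorem infty_mem_completedCoset (D : AddSubgroup A) (b : A) : ∞ ∈ completedCoset D b :=
  Set.mem_insert _ _

theorem coe_mem_completedCoset {D : AddSubgroup A} {b x : A} :
    (x : OnePoint A) ∈ completedCoset D b ↔ x - b ∈ D := by
  simp [completedCoset]

theorem completedCoset_eq_of_coe_mem {D : AddSubgroup A} {b y : A}
    (hy : (y : OnePoint A) ∈ completedCoset D b) : completedCoset D b = completedCoset D y := by
  rw [coe_mem_completedCoset] at hy
  have : {x : A | x - b ∈ D} = {x | x - y ∈ D} := by
    ext x
    change x - b ∈ D ↔ x - y ∈ D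
    rw [← sub_add_sub_cancel x y b, D.add_mem_cancel_right hy]
  rw [completedCoset, this, completedCoset]

theorem subgroup_eq_of_completedCoset_eq {D E : AddSubgroup A} {b c : A}
    (h : completedCoset D b = completedCoset E c) : D = E := by
  have hb : (b : OnePoint A) ∈ completedCoset E c := by
    rw [← h, coe_mem_completedCoset, sub_self]
    exact D.zero_mem
  rw [completedCoset_eq_of_coe_mem hb] at h
  ext x
  simpa [coe_mem_completedCoset] using Set.ext_iff.1 h ((x + b : A) : OnePoint A)

variable {K F : Type*} [Field K] [Field F] (i : K →+* F)

/-- The `K`-line of `F` spanned by `a`, as an additive subgroup. -/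
def direction (a : F) : AddSubgroup F :=
  ((AddMonoidHom.mulLeft a).comp i.toAddMonoidHom).range

variable {i}

theorem mem_direction {a x : F} : x ∈ direction i a ↔ ∃ k, a * i k = x := Iff.rfl

theorem direction_eq_of_one_mem {a : F} (h : 1 ∈ direction i a) :
    direction i a = direction i 1 := by
  obtain ⟨k, hk⟩ := mem_direction.1 h
  ext x
  simp only [mem_direction, one_mul]
  constructor
  · rintro ⟨l, rfl⟩
    refine ⟨k⁻¹ * l, ?_⟩
    rw [map_mul, map_inv₀, eq_inv_of_mul_eq_one_left hk]
  · rintro ⟨l, rfl⟩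
    refine ⟨k * l, ?_⟩
    rw [map_mul, ← mul_assoc, hk, one_mul]

variable (i) in
/-- The projective line over `K` inside the projective line over its extension `F`. -/
def baseCircle : Set (OnePoint F) := Set.range (OnePoint.map i)

theorem baseCircle_eq_completedCoset : baseCircle i = completedCoset (direction i 1) 0 := by
  ext p
  cases p with
  | infty => exact iff_of_true ⟨∞, rfl⟩ (infty_mem_completedCoset _ _)
  | coe x =>
    rw [coe_mem_completedCoset, mem_direction, baseCircle, Set.mem_range, OnePoint.exists]
    simp

variable [DecidableEq F]

theorem exists_smul_eq_infty (p : OnePoint F) : ∃ g : GL (Fin 2) F, g • p = ∞ := by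
  cases p with
  | infty => exact ⟨1, one_smul _ _⟩
  | coe a =>
    refine ⟨GeneralLinearGroup.mkOfDetNeZero !![0, 1; 1, -a] (by simp [det_fin_two]), ?_⟩
    simp [smul_some_eq_ite, GeneralLinearGroup.mkOfDetNeZero]

theorem exists_smul_eq_affine {a : F} (ha : a ≠ 0) (b : F) : ∃ g : GL (Fin 2) F,
    g • (∞ : OnePoint F) = ∞ ∧ ∀ x : F, g • (x : OnePoint F) = ((a * x + b : F) : OnePoint F) := by
  refine ⟨GeneralLinearGroup.mkOfDetNeZero !![a, b; 0, 1] (by simpa [det_fin_two] using ha), ?_, ?_⟩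
  · simp [smul_infty_eq_ite, GeneralLinearGroup.mkOfDetNeZero]
  · simp [smul_some_eq_ite, GeneralLinearGroup.mkOfDetNeZero]

theorem exists_affine_of_smul_infty {g : GL (Fin 2) F} (h : g • (∞ : OnePoint F) = ∞) :
    ∃ a ≠ 0, ∃ b, ∀ x : F, g • (x : OnePoint F) = ((a * x + b : F) : OnePoint F) := by
  rw [smul_infty_eq_self_iff] at h
  have hdet := g.det_ne_zero
  rw [det_fin_two, h, mul_zero, sub_zero] at hdet
  have h00 : g 0 0 ≠ 0 := left_ne_zero_of_mul hdet
  have h11 : g 1 1 ≠ 0 := right_ne_zero_of_mul hdet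
  refine ⟨g 0 0 / g 1 1, div_ne_zero h00 h11, g 0 1 / g 1 1, fun x => ?_⟩
  rw [smul_some_eq_ite, h, zero_mul, zero_add, if_neg h11]
  congr 1
  field_simp

theorem exists_smul_infty_zero_one {p q r : OnePoint F} (hpq : p ≠ q) (hpr : p ≠ r)
    (hqr : q ≠ r) : ∃ g : GL (Fin 2) F, g • (∞ : OnePoint F) = p ∧
      g • ((0 : F) : OnePoint F) = q ∧ g • ((1 : F) : OnePoint F) = r := by
  obtain ⟨h, hp⟩ := exists_smul_eq_infty p
  have finite_image {s} (hs : p ≠ s) : ∃ x : F, (x : OnePoint F) = h • s :=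
    ne_infty_iff_exists.1 fun e => hs (smul_left_cancel h (hp.trans e.symm))
  obtain ⟨y, hy⟩ := finite_image hpq
  obtain ⟨z, hz⟩ := finite_image hpr
  have hzy : z - y ≠ 0 := by
    refine sub_ne_zero.2 fun e => hqr (smul_left_cancel h ?_)
    rw [← hy, ← hz, e]
  obtain ⟨g, hg, hgx⟩ := exists_smul_eq_affine hzy y
  refine ⟨h⁻¹ * g, ?_, ?_, ?_⟩
  · rw [mul_smul, hg, inv_smul_eq_iff, hp]
  · rw [mul_smul, hgx, inv_smul_eq_iff, ← hy, mul_zero, zero_add]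
  · rw [mul_smul, hgx, inv_smul_eq_iff, ← hz, mul_one, sub_add_cancel]

variable (i) in
/-- The circles of the Möbius geometry of the extension `i : K →+* F`. -/
def IsCircle (C : Set (OnePoint F)) : Prop := ∃ g : GL (Fin 2) F, C = g • baseCircle i

theorem isCircle_smul_iff {g : GL (Fin 2) F} {C : Set (OnePoint F)} :
    IsCircle i (g • C) ↔ IsCircle i C := by
  constructor
  · rintro ⟨h, hC⟩
    exact ⟨g⁻¹ * h, by rw [mul_smul, ← hC, inv_smul_smul]⟩
  · rintro ⟨h, rfl⟩
    exact ⟨g * h, by rw [mul_smul]⟩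

theorem smul_baseCircle_eq_completedCoset {g : GL (Fin 2) F} {a b : F}
    (hg : g • (∞ : OnePoint F) = ∞)
    (hgx : ∀ x : F, g • (x : OnePoint F) = ((a * x + b : F) : OnePoint F)) :
    g • baseCircle i = completedCoset (direction i a) b := by
  rw [baseCircle, Set.smul_set_range]
  ext p
  cases p with
  | infty => exact iff_of_true ⟨∞, by simpa using hg⟩ (infty_mem_completedCoset _ _)
  | coe x =>
    rw [coe_mem_completedCoset, mem_direction, Set.mem_range, OnePoint.exists]
    simp [hg, hgx, eq_sub_iff_add_eq]

variable (i) in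
/-- The circles of a finite extension, as blocks. -/
def circleBlocks : Set (Finset (OnePoint F)) := {b | IsCircle i (b : Set (OnePoint F))}

theorem card_of_mem_circleBlocks [Fintype K] {b : Finset (OnePoint F)} (hb : b ∈ circleBlocks i) :
    #b = Fintype.card K + 1 := by
  have hinj : Function.Injective (OnePoint.map i) := Option.map_injective i.injective
  obtain ⟨g, hg⟩ := hb
  rw [← Set.ncard_coe_finset, hg, Set.ncard_smul_set, baseCircle, ← Set.image_univ,
    Set.ncard_image_of_injective _ hinj, Set.ncard_univ]
  exact (Nat.card_eq_fintype_card (α := Option K)).trans Fintype.card_option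

theorem map_smul_baseCircle (k : GL (Fin 2) K) : k.map i • baseCircle i = baseCircle i := by
  classical
  rw [baseCircle, Set.smul_set_range]
  simp_rw [← OnePoint.map_smul]
  exact (MulAction.surjective k).range_comp (OnePoint.map i)

theorem isCircle_and_infty_mem_iff {C : Set (OnePoint F)} : IsCircle i C ∧ ∞ ∈ C ↔
    ∃ a ≠ 0, ∃ b, C = completedCoset (direction i a) b := by
  classical
  constructor
  · rintro ⟨⟨g, rfl⟩, ⟨_, ⟨p, rfl⟩, hp⟩⟩
    obtain ⟨k, hk⟩ := exists_smul_eq_infty p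
    have hk' : k⁻¹ • (∞ : OnePoint K) = p := inv_smul_eq_iff.2 hk.symm
    have hg : (g * k⁻¹.map i) • (∞ : OnePoint F) = ∞ := by
      rw [mul_smul, ← OnePoint.map_infty i, ← OnePoint.map_smul, hk']
      exact hp
    obtain ⟨a, ha, b, hab⟩ := exists_affine_of_smul_infty hg
    refine ⟨a, ha, b, ?_⟩
    rw [← smul_baseCircle_eq_completedCoset hg hab, mul_smul, map_smul_baseCircle]
  · rintro ⟨a, ha, b, rfl⟩
    obtain ⟨g, hg, hgx⟩ := exists_smul_eq_affine ha b
    exact ⟨⟨g, (smul_baseCircle_eq_completedCoset hg hgx).symm⟩, infty_mem_completedCoset _ _⟩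

theorem eq_baseCircle_of_mem {C : Set (OnePoint F)} (hC : IsCircle i C) (hinf : ∞ ∈ C)
    (hzero : ((0 : F) : OnePoint F) ∈ C) (hone : ((1 : F) : OnePoint F) ∈ C) :
    C = baseCircle i := by
  obtain ⟨a, -, b, rfl⟩ := isCircle_and_infty_mem_iff.1 ⟨hC, hinf⟩
  rw [completedCoset_eq_of_coe_mem hzero] at hone ⊢
  rw [coe_mem_completedCoset, sub_zero] at hone
  rw [direction_eq_of_one_mem hone, baseCircle_eq_completedCoset]

theorem existsUnique_isCircle {p q r : OnePoint F} (hpq : p ≠ q) (hpr : p ≠ r) (hqr : q ≠ r) :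
    ∃! C : Set (OnePoint F), IsCircle i C ∧ p ∈ C ∧ q ∈ C ∧ r ∈ C := by
  obtain ⟨g, rfl, rfl, rfl⟩ := exists_smul_infty_zero_one hpq hpr hqr
  refine ⟨g • baseCircle i, ⟨⟨g, rfl⟩, ?_⟩, fun C ⟨hC, hp, hq, hr⟩ => ?_⟩
  · simp only [Set.smul_mem_smul_set_iff]
    exact ⟨⟨∞, by simp⟩, ⟨(0 : K), by simp⟩, ⟨(1 : K), by simp⟩⟩
  · rw [← Set.mem_inv_smul_set_iff] at hp hq hr
    rw [← eq_baseCircle_of_mem (isCircle_smul_iff.2 hC) hp hq hr, smul_inv_smul]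

variable [Finite F]

theorem isResolutionAt_infty : IsResolutionAt (circleBlocks i) ∞
    fun D : {D // ∃ a ≠ 0, direction i a = D} =>
      {b : Finset (OnePoint F) | ∃ y, (b : Set (OnePoint F)) = completedCoset D y} where
  exists_mem_iff b := by
    refine Iff.trans ?_ isCircle_and_infty_mem_iff.symm
    simp
  index_unique := by
    rintro b ⟨D, hD⟩ ⟨E, hE⟩ ⟨y, hy⟩ ⟨z, hz⟩
    exact Subtype.ext (subgroup_eq_of_completedCoset_eq (hy.symm.trans hz))
  existsUnique_mem D p hp := by
    have := Fintype.ofFinite F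
    obtain ⟨y, rfl⟩ := ne_infty_iff_exists.1 hp
    refine ⟨(completedCoset D y).toFinite.toFinset, ⟨⟨y, by simp⟩, ?_⟩, ?_⟩
    · simp [coe_mem_completedCoset]
    · rintro b ⟨⟨z, hz⟩, hy⟩
      rw [← mem_coe, hz] at hy
      rw [← coe_inj, hz, completedCoset_eq_of_coe_mem hy, Set.Finite.coe_toFinset]

theorem isRDSOn_circleBlocks [Fintype K] :
    IsRDSOn 3 (Fintype.card K + 1) (circleBlocks i) where
  card_eq _ := card_of_mem_circleBlocks
  existsUnique_block T hT := by
    have := Fintype.ofFinite F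
    classical
    obtain ⟨p, q, r, hpq, hpr, hqr, rfl⟩ := card_eq_three.1 hT
    obtain ⟨C, hC, hunique⟩ := existsUnique_isCircle (i := i) hpq hpr hqr
    refine ⟨C.toFinite.toFinset, by simpa [circleBlocks, Set.insert_subset_iff] using hC, ?_⟩
    rintro b ⟨hb, hT⟩
    rw [← coe_inj, Set.Finite.coe_toFinset]
    exact hunique _ ⟨hb, by simpa [insert_subset_iff] using hT⟩
  resolvable p := by
    have := Fintype.ofFinite F
    classical
    obtain ⟨g, hg⟩ := exists_smul_eq_infty p
    refine (IsResolutionAt.of_smul (g := g) (fun b => ?_)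
      (hg ▸ isResolutionAt_infty (i := i))).exists_fin
    change IsCircle i _ ↔ IsCircle i _
    rw [coe_smul_finset, isCircle_smul_iff]

end Circles

section Footprints

variable {V W : Type*}

/-- The projection of the point set `{∞} ∪ V × W` onto `{∞} ∪ V`, whose fibres over `V` are the
groups. -/
def proj : Option (V × W) → Option V := Option.map Prod.fst

theorem proj_eq_none_iff {x : Option (V × W)} : proj x = none ↔ x = none := Option.map_eq_none_iff

/-- The group over `a`, completed by the point `∞`. -/
def groupBlock [Fintype W] (a : V) : Finset (Option (V × W)) := insertNone ({a} ×ˢ univ)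

theorem card_groupBlock [Fintype W] (a : V) :
    #(groupBlock a : Finset (Option (V × W))) = Fintype.card W + 1 := by
  simp [groupBlock]

variable {V' W' : Type*} (e : V ↪ V') (f : W ≃ W')

/-- The embedding of `{∞} ∪ V × W` into `{∞} ∪ V' × W'` that maps groups by `e` and acts on the
labels within a group by `f`. -/
def lift : Option (V × W) ↪ Option (V' × W') := (e.prodMap f.toEmbedding).optionMap

theorem proj_lift (x : Option (V × W)) : proj (lift e f x) = e.optionMap (proj x) := by
  cases x <;> rfl

theorem exists_lift_eq {y : Option (V' × W')} {a : Option V} (h : e.optionMap a = proj y) :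
    ∃ x, lift e f x = y := by
  obtain _ | ⟨b, w⟩ := y
  · exact ⟨none, rfl⟩
  · cases a with
    | none => exact absurd h (Option.some_ne_none b).symm
    | some a =>
      refine ⟨some (a, f.symm w), ?_⟩
      have hab : e a = b := Option.some_injective _ h
      simp [lift, hab]

variable [DecidableEq V]

/-- The points of `{∞} ∪ V` spanned by a set of points of `{∞} ∪ V × W`: the projections of its
elements, together with `∞` as soon as two of them lie in the same group. -/
def footprint (S : Finset (Option (V × W))) : Finset (Option V) :=
  if #(S.image proj) = #S then S.image proj else insert none (S.image proj)

variable {S T : Finset (Option (V × W))} {x y : Option (V × W)}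

theorem mem_footprint {a : Option V} : a ∈ footprint S ↔
    (∃ x ∈ S, proj x = a) ∨ a = none ∧ ∃ x ∈ S, ∃ y ∈ S, proj x = proj y ∧ x ≠ y := by
  have hinj : #(S.image proj) = #S ↔ ∀ x ∈ S, ∀ y ∈ S, proj x = proj y → x = y := card_image_iff
  unfold footprint
  split_ifs with h
  · rw [hinj] at h
    rw [mem_image, or_iff_left]
    rintro ⟨-, x, hx, y, hy, hxy, hne⟩
    exact hne (h x hx y hy hxy)
  · rw [hinj] at h
    push Not at h
    rw [mem_insert, mem_image, or_comm, and_iff_left h]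

theorem proj_mem_footprint (hx : x ∈ S) : proj x ∈ footprint S :=
  mem_footprint.2 (.inl ⟨x, hx, rfl⟩)

theorem footprint_mono (h : S ⊆ T) : footprint S ⊆ footprint T := by
  intro a
  simp only [mem_footprint]
  rintro (⟨x, hx, hxa⟩ | ⟨ha, x, hx, y, hy, hxy⟩)
  · exact .inl ⟨x, h hx, hxa⟩
  · exact .inr ⟨ha, x, h hx, y, h hy, hxy⟩

theorem card_footprint_le : #(footprint S) ≤ #S := by
  unfold footprint
  split_ifs with h
  · exact h.le
  · exact (card_insert_le _ _).trans (card_image_le.lt_of_ne h)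

theorem none_mem_footprint_of_card_lt (h : #(footprint S) < #S) : none ∈ footprint S := by
  unfold footprint at h ⊢
  split_ifs at h ⊢ with hcard
  · exact absurd hcard h.ne
  · exact mem_insert_self _ _

theorem footprint_map [DecidableEq V'] :
    footprint (S.map (lift e f)) = (footprint S).map e.optionMap := by
  have himage : (S.map (lift e f)).image proj = (S.image proj).map e.optionMap := by
    ext a
    simp [proj_lift]
  rw [footprint, himage, card_map, card_map, footprint]
  split_ifs
  · rfl
  · rw [map_insert]
    rfl

theorem subset_groupBlock_iff [Fintype W] {a : V} :
    S ⊆ groupBlock a ↔ footprint S ⊆ {none, some a} := by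
  have hmem (x : Option (V × W)) : x ∈ groupBlock a ↔ proj x ∈ ({none, some a} : Finset _) := by
    cases x <;> simp [groupBlock, proj, Prod.ext_iff, eq_comm (a := a)]
  constructor
  · intro h b hb
    obtain ⟨x, hx, rfl⟩ | ⟨rfl, -⟩ := mem_footprint.1 hb
    · exact (hmem x).1 (h hx)
    · exact mem_insert_self _ _
  · exact fun h x hx => (hmem x).2 (h (proj_mem_footprint hx))

theorem card_footprint_le_two_of_subset_groupBlock [Fintype W] {a : V} (h : S ⊆ groupBlock a) :
    #(footprint S) ≤ 2 :=
  (card_le_card (subset_groupBlock_iff.1 h)).trans card_le_two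

theorem existsUnique_subset_groupBlock [Fintype W] (hcard : #(footprint S) = 2)
    (hnone : none ∈ footprint S) : ∃! a : V, S ⊆ groupBlock a := by
  obtain ⟨q, hq⟩ := card_eq_one.1 (by rw [card_erase_of_mem hnone, hcard] :
    #((footprint S).erase none) = 1)
  have heq : footprint S = {none, q} := by rw [← insert_erase hnone, hq]
  have hqn : q ≠ none := ne_of_mem_erase (hq ▸ mem_singleton_self q)
  obtain ⟨a, rfl⟩ := Option.ne_none_iff_exists'.1 hqn
  refine ⟨a, subset_groupBlock_iff.2 heq.le, fun b hb => ?_⟩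
  have hab := subset_groupBlock_iff.1 hb (heq ▸ mem_insert_of_mem (mem_singleton_self (some a)))
  simpa [eq_comm] using hab

theorem exists_footprint_pair_eq [DecidableEq W] (h : x ≠ y) :
    ∃ q ≠ proj x, footprint {x, y} = {proj x, q} := by
  by_cases hp : proj x = proj y
  · have hx : none ≠ proj x := fun hx =>
      h ((proj_eq_none_iff.1 hx.symm).trans (proj_eq_none_iff.1 (hp ▸ hx.symm)).symm)
    refine ⟨none, hx, ?_⟩
    rw [footprint, image_insert, image_singleton, ← hp, pair_eq_singleton, card_singleton,
      card_pair h, if_neg (by decide), pair_comm]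
  · refine ⟨proj y, Ne.symm hp, ?_⟩
    rw [footprint, image_insert, image_singleton, card_pair h, card_pair hp, if_pos rfl]

theorem two_le_card_footprint (h : 2 ≤ #S) : 2 ≤ #(footprint S) := by
  classical
  obtain ⟨x, hx, y, hy, hxy⟩ := one_lt_card.1 h
  obtain ⟨q, hq, hpair⟩ := exists_footprint_pair_eq hxy
  rw [← card_pair hq.symm, ← hpair]
  exact card_le_card (footprint_mono (by simp [insert_subset_iff, hx, hy]))

theorem none_mem_footprint_of_subset_groupBlock [Fintype W] {a : V} (h : S ⊆ groupBlock a)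
    (hS : 2 ≤ #S) : none ∈ footprint S := by
  by_contra hnone
  have hsub := (subset_insert_iff_of_notMem hnone).1 (subset_groupBlock_iff.1 h)
  have hle := card_le_card hsub
  have hge := two_le_card_footprint hS
  rw [card_singleton] at hle
  omega

end Footprints

section Fillings

variable {V W κ ι : Type*}

/-- The completed groups together with the blocks filling the circles of `𝒞`. -/
def composite [Fintype W] (𝒞 : Set (Finset (Option V)))
    (N : Finset (Option V) → Set (Finset (Option (V × W)))) : Set (Finset (Option (V × W))) :=
  {S | (∃ a, groupBlock a = S) ∨ ∃ A ∈ 𝒞, S ∈ N A}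

/-- The classes of the resolution at `x` of a composite design, from a resolution `R` of the
circles at `proj x` and colourings `L` of the fillings. The class `none` consists of the completed
groups through `x` and the blocks of colour `none`. -/
def compositeClass [Fintype W] (R : ι → Set (Finset (Option V)))
    (L : Finset (Option V) → Option κ → Set (Finset (Option (V × W)))) (x : Option (V × W))
    (c : Option (ι × κ)) : Set (Finset (Option (V × W))) :=
  {S | (c = none ∧ x ∈ S ∧ ∃ a, groupBlock a = S) ∨
    ∃ i j, c = Option.map (Prod.mk i) j ∧ ∃ A ∈ R i, S ∈ L A j}

variable {R : ι → Set (Finset (Option V))}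
  {L : Finset (Option V) → Option κ → Set (Finset (Option (V × W)))} {x : Option (V × W)}
  {S : Finset (Option (V × W))}

theorem mem_compositeClass_some [Fintype W] {i : ι} {j : κ} :
    S ∈ compositeClass R L x (some (i, j)) ↔ ∃ A ∈ R i, S ∈ L A (some j) := by
  constructor
  · rintro (⟨h, -⟩ | ⟨i', j', h, A, hA, hS⟩)
    · cases h
    · obtain ⟨j'', rfl, hij⟩ := Option.map_eq_some_iff.1 h.symm
      obtain ⟨rfl, rfl⟩ := Prod.mk.inj hij
      exact ⟨A, hA, hS⟩
  · exact fun h => .inr ⟨i, some j, rfl, h⟩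

theorem mem_compositeClass_none [Fintype W] :
    S ∈ compositeClass R L x none ↔
      (x ∈ S ∧ ∃ a, groupBlock a = S) ∨ ∃ i, ∃ A ∈ R i, S ∈ L A none := by
  constructor
  · rintro (⟨-, h⟩ | ⟨i, j, h, hA⟩)
    · exact .inl h
    · obtain rfl := Option.map_eq_none_iff.1 h.symm
      exact .inr ⟨i, hA⟩
  · rintro (h | ⟨i, hA⟩)
    · exact .inl ⟨rfl, h⟩
    · exact .inr ⟨i, none, rfl, hA⟩

variable [DecidableEq V]

/-- The condition on the blocks with which the points over a circle `A` are filled: they have `k`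
points, lie over `A`, and have no three points in a common completed group. -/
structure IsFillingBlock (k : ℕ) (A : Finset (Option V)) (S : Finset (Option (V × W))) : Prop where
  card_eq : #S = k
  footprint_subset : footprint S ⊆ A
  card_footprint : ∀ T ⊆ S, #T = 3 → #(footprint T) = 3

theorem IsFillingBlock.exists_triple {k : ℕ} {A : Finset (Option V)}
    (hS : IsFillingBlock k A S) (hk : 3 ≤ k) (hx : x ∈ S) :
    ∃ T ⊆ S, x ∈ T ∧ #T = 3 ∧ #(footprint T) = 3 := by
  obtain ⟨T, hxT, hTS, hT⟩ := exists_subsuperset_card_eq (singleton_subset_iff.2 hx)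
    (by simp : #{x} ≤ 3) (hS.card_eq ▸ hk)
  exact ⟨T, hTS, singleton_subset_iff.1 hxT, hT, hS.card_footprint T hTS hT⟩

variable [DecidableEq W]

/-- The blocks through `x` of the block set `N` over the circle `A`, coloured by `Option κ`, cover
exactly once every triple through `x` that spans three points of `A`. Every colour `some j` covers
each point over `A` once. The colour `none` is used only if `∞ ∈ A`, and then covers
the points that do not lie with `x` in a completed group once and no others. -/
structure IsLocalFilling (N : Set (Finset (Option (V × W)))) (A : Finset (Option V))
    (x : Option (V × W)) (L : Option κ → Set (Finset (Option (V × W)))) : Prop where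
  exists_mem_iff : ∀ S, (∃ c, S ∈ L c) ↔ S ∈ N ∧ x ∈ S
  existsUnique_triple : ∀ T, x ∈ T → #T = 3 → #(footprint T) = 3 → footprint T ⊆ A →
    ∃! p : Option κ × Finset (Option (V × W)), p.2 ∈ L p.1 ∧ T ⊆ p.2
  existsUnique_some : ∀ j, ∀ y ≠ x, footprint {x, y} ⊆ A → ∃! S, S ∈ L (some j) ∧ y ∈ S
  existsUnique_none : ∀ y ≠ x, footprint {x, y} ⊆ A → none ∈ A → none ∉ footprint {x, y} →
    ∃! S, S ∈ L none ∧ y ∈ S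
  none_mem : ∀ S ∈ L none, none ∈ A
  none_notMem : ∀ S ∈ L none, ∀ y ∈ S, y ≠ x → none ∉ footprint {x, y}

variable (κ) in
/-- A filling of the circle `A`: a block set covering exactly once every triple of points that
spans three points of `A`, together with colourings of the blocks through each point. -/
structure IsFilling (k : ℕ) (A : Finset (Option V)) (N : Set (Finset (Option (V × W)))) : Prop where
  isFillingBlock : ∀ S ∈ N, IsFillingBlock k A S
  exists_local : ∀ x, proj x ∈ A →
    ∃ L : Option κ → Set (Finset (Option (V × W))), IsLocalFilling N A x L

variable [Fintype W] {k : ℕ} {𝒞 : Set (Finset (Option V))}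
  {N : Finset (Option V) → Set (Finset (Option (V × W)))}

theorem existsUnique_mem_composite (h𝒞 : IsRDSOn 3 k 𝒞)
    (hN : ∀ A ∈ 𝒞, IsFilling κ (Fintype.card W + 1) A (N A)) {T : Finset (Option (V × W))}
    (hT : #T = 3) : ∃! S, S ∈ composite 𝒞 N ∧ T ⊆ S := by
  obtain hT3 | hT2 := (hT ▸ card_footprint_le (S := T)).eq_or_lt
  · obtain ⟨A, ⟨hA, hTA⟩, hunique⟩ := h𝒞.existsUnique_block _ hT3
    obtain ⟨x, hx⟩ : T.Nonempty := card_pos.1 (by omega)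
    obtain ⟨L, hL⟩ := (hN A hA).exists_local x (hTA (proj_mem_footprint hx))
    obtain ⟨⟨c, S⟩, ⟨hS, hTS⟩, hSunique⟩ := hL.existsUnique_triple T hx hT hT3 hTA
    refine ⟨S, ⟨.inr ⟨A, hA, ((hL.exists_mem_iff S).1 ⟨c, hS⟩).1⟩, hTS⟩, ?_⟩
    rintro S' ⟨⟨a, rfl⟩ | ⟨B, hB, hS'⟩, hTS'⟩
    · have := card_footprint_le_two_of_subset_groupBlock hTS'
      omega
    · have hTB := (footprint_mono hTS').trans ((hN B hB).isFillingBlock S' hS').footprint_subset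
      obtain rfl := hunique B ⟨hB, hTB⟩
      obtain ⟨c', hc'⟩ := (hL.exists_mem_iff S').2 ⟨hS', hTS' hx⟩
      exact congrArg Prod.snd (hSunique (c', S') ⟨hc', hTS'⟩)
  · have hcard : #(footprint T) = 2 := by
      have := two_le_card_footprint (S := T) (by omega)
      omega
    obtain ⟨a, ha, hunique⟩ := existsUnique_subset_groupBlock hcard
      (none_mem_footprint_of_card_lt (by omega))
    refine ⟨groupBlock a, ⟨.inl ⟨a, rfl⟩, ha⟩, ?_⟩
    rintro S' ⟨⟨b, rfl⟩ | ⟨B, hB, hS'⟩, hTS'⟩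
    · rw [hunique b hTS']
    · have := ((hN B hB).isFillingBlock S' hS').card_footprint T hTS' hT
      omega

/-- What is needed to resolve a composite design at `x`: a resolution `R` at `proj x` of the
circles and, for each circle `A` through `proj x`, a colouring `L A` of the blocks through `x` of
its filling. -/
structure IsFilledResolution (𝒞 : Set (Finset (Option V)))
    (N : Finset (Option V) → Set (Finset (Option (V × W)))) (x : Option (V × W))
    (R : ι → Set (Finset (Option V)))
    (L : Finset (Option V) → Option κ → Set (Finset (Option (V × W)))) : Prop where
  existsUnique_circle : ∀ T : Finset (Option V), #T = 3 → ∃! A, A ∈ 𝒞 ∧ T ⊆ A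
  isResolutionAt : IsResolutionAt 𝒞 (proj x) R
  isFillingBlock : ∀ A ∈ 𝒞, ∀ S ∈ N A, IsFillingBlock (Fintype.card W + 1) A S
  isLocalFilling : ∀ A ∈ 𝒞, proj x ∈ A → IsLocalFilling (N A) A x (L A)

namespace IsFilledResolution

variable {i : ι} {A : Finset (Option V)} {j : Option κ}

theorem mem_circles (h : IsFilledResolution 𝒞 N x R L) (hA : A ∈ R i) : A ∈ 𝒞 ∧ proj x ∈ A :=
  (h.isResolutionAt.exists_mem_iff A).1 ⟨i, hA⟩

theorem isLocalFilling_of_mem (h : IsFilledResolution 𝒞 N x R L) (hA : A ∈ R i) :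
    IsLocalFilling (N A) A x (L A) :=
  h.isLocalFilling A (h.mem_circles hA).1 (h.mem_circles hA).2

theorem mem_filling (h : IsFilledResolution 𝒞 N x R L) (hA : A ∈ R i) (hS : S ∈ L A j) :
    S ∈ N A ∧ x ∈ S :=
  ((h.isLocalFilling_of_mem hA).exists_mem_iff S).1 ⟨j, hS⟩

theorem isFillingBlock_of_mem (h : IsFilledResolution 𝒞 N x R L) (hA : A ∈ R i)
    (hS : S ∈ L A j) : IsFillingBlock (Fintype.card W + 1) A S :=
  h.isFillingBlock A (h.mem_circles hA).1 S (h.mem_filling hA hS).1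

theorem footprint_pair_subset (h : IsFilledResolution 𝒞 N x R L) (hA : A ∈ R i) (hS : S ∈ L A j)
    {y : Option (V × W)} (hy : y ∈ S) : footprint {x, y} ⊆ A :=
  (footprint_mono (by simp [insert_subset_iff, hy, (h.mem_filling hA hS).2])).trans
    (h.isFillingBlock_of_mem hA hS).footprint_subset

theorem existsUnique_mem_some (h : IsFilledResolution 𝒞 N x R L) (i : ι) (j : κ)
    {y : Option (V × W)} (hy : y ≠ x) : ∃! S, S ∈ compositeClass R L x (some (i, j)) ∧ y ∈ S := by
  obtain ⟨q, hq, hpair⟩ := exists_footprint_pair_eq hy.symm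
  obtain ⟨A, ⟨hA, hqA⟩, hAunique⟩ := h.isResolutionAt.existsUnique_mem i q hq
  have hpairA : footprint {x, y} ⊆ A := by
    simp [hpair, insert_subset_iff, hqA, (h.mem_circles hA).2]
  obtain ⟨S, ⟨hS, hyS⟩, hSunique⟩ := (h.isLocalFilling_of_mem hA).existsUnique_some j y hy hpairA
  simp only [mem_compositeClass_some]
  refine ⟨S, ⟨⟨A, hA, hS⟩, hyS⟩, ?_⟩
  rintro S' ⟨⟨B, hB, hS'⟩, hyS'⟩
  have hqB : q ∈ B := h.footprint_pair_subset hB hS' hyS' (by simp [hpair])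
  obtain rfl := hAunique B ⟨hB, hqB⟩
  exact hSunique S' ⟨hS', hyS'⟩

theorem existsUnique_mem_none_of_none_mem (h : IsFilledResolution 𝒞 N x R L)
    {y : Option (V × W)} (hy : y ≠ x) (hnone : none ∈ footprint {x, y}) :
    ∃! S, S ∈ compositeClass R L x none ∧ y ∈ S := by
  obtain ⟨q, hq, hpair⟩ := exists_footprint_pair_eq hy.symm
  obtain ⟨a, ha, hunique⟩ := existsUnique_subset_groupBlock
    (by rw [hpair, card_pair hq.symm]) hnone
  simp only [insert_subset_iff, singleton_subset_iff] at ha hunique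
  simp only [mem_compositeClass_none]
  refine ⟨groupBlock a, ⟨.inl ⟨ha.1, a, rfl⟩, ha.2⟩, ?_⟩
  rintro _ ⟨⟨hx, b, rfl⟩ | ⟨i, A, hA, hS⟩, hyS⟩
  · rw [hunique b ⟨hx, hyS⟩]
  · exact absurd hnone ((h.isLocalFilling_of_mem hA).none_notMem _ hS y hyS hy)

theorem existsUnique_mem_none_of_none_notMem (h : IsFilledResolution 𝒞 N x R L)
    {y : Option (V × W)} (hy : y ≠ x) (hnone : none ∉ footprint {x, y}) :
    ∃! S, S ∈ compositeClass R L x none ∧ y ∈ S := by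
  obtain ⟨q, hq, hpair⟩ := exists_footprint_pair_eq hy.symm
  obtain ⟨A, ⟨hA, hsub⟩, hAunique⟩ := h.existsUnique_circle (insert none (footprint {x, y}))
    (by rw [card_insert_of_notMem hnone, hpair, card_pair hq.symm])
  rw [insert_subset_iff] at hsub
  have hxA : proj x ∈ A := hsub.2 (by simp [hpair])
  obtain ⟨i, hiA⟩ := (h.isResolutionAt.exists_mem_iff A).2 ⟨hA, hxA⟩
  obtain ⟨S, ⟨hS, hyS⟩, hSunique⟩ :=
    (h.isLocalFilling A hA hxA).existsUnique_none y hy hsub.2 hsub.1 hnone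
  simp only [mem_compositeClass_none]
  refine ⟨S, ⟨.inr ⟨i, A, hiA, hS⟩, hyS⟩, ?_⟩
  rintro S' ⟨⟨hx, b, rfl⟩ | ⟨i', B, hB, hS'⟩, hyS'⟩
  · have hsubset := insert_subset hx (singleton_subset_iff.2 hyS')
    exact absurd (none_mem_footprint_of_subset_groupBlock hsubset (card_pair hy.symm).ge) hnone
  · obtain rfl := hAunique B ⟨(h.mem_circles hB).1, insert_subset
      ((h.isLocalFilling_of_mem hB).none_mem S' hS') (h.footprint_pair_subset hB hS' hyS')⟩
    exact hSunique S' ⟨hS', hyS'⟩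

variable [Nontrivial W]

theorem exists_triple (h : IsFilledResolution 𝒞 N x R L) (hA : A ∈ R i) (hS : S ∈ L A j) :
    ∃ T ⊆ S, x ∈ T ∧ #T = 3 ∧ #(footprint T) = 3 :=
  (h.isFillingBlock_of_mem hA hS).exists_triple (Nat.succ_le_succ Fintype.one_lt_card)
    (h.mem_filling hA hS).2

theorem groupBlock_notMem (h : IsFilledResolution 𝒞 N x R L) (hA : A ∈ R i) (a : V) :
    groupBlock a ∉ L A j := by
  intro hS
  obtain ⟨T, hTS, -, -, hT⟩ := h.exists_triple hA hS
  exact absurd (card_footprint_le_two_of_subset_groupBlock hTS) (by omega)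

theorem colour_unique (h : IsFilledResolution 𝒞 N x R L) (hA : A ∈ R i) (hS : S ∈ L A j)
    {i' : ι} {B : Finset (Option V)} {j' : Option κ} (hB : B ∈ R i') (hS' : S ∈ L B j') :
    i = i' ∧ j = j' := by
  obtain ⟨T, hTS, hxT, hT, hT3⟩ := h.exists_triple hA hS
  have hTA := (footprint_mono hTS).trans (h.isFillingBlock_of_mem hA hS).footprint_subset
  have hTB := (footprint_mono hTS).trans (h.isFillingBlock_of_mem hB hS').footprint_subset
  obtain rfl := (h.existsUnique_circle _ hT3).unique
    ⟨(h.mem_circles hA).1, hTA⟩ ⟨(h.mem_circles hB).1, hTB⟩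
  have hpair := ((h.isLocalFilling_of_mem hA).existsUnique_triple T hxT hT hT3 hTA).unique
    (y₁ := (j, S)) (y₂ := (j', S)) ⟨hS, hTS⟩ ⟨hS', hTS⟩
  exact ⟨h.isResolutionAt.index_unique A i i' hA hB, congrArg Prod.fst hpair⟩

theorem isResolutionAt_composite (h : IsFilledResolution 𝒞 N x R L) :
    IsResolutionAt (composite 𝒞 N) x (compositeClass R L x) where
  exists_mem_iff S := by
    constructor
    · rintro ⟨c, ⟨-, hx, hgroup⟩ | ⟨i, j, -, A, hA, hS⟩⟩
      · exact ⟨.inl hgroup, hx⟩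
      · exact ⟨.inr ⟨A, (h.mem_circles hA).1, (h.mem_filling hA hS).1⟩, (h.mem_filling hA hS).2⟩
    · rintro ⟨hgroup | ⟨A, hA, hS⟩, hx⟩
      · exact ⟨none, .inl ⟨rfl, hx, hgroup⟩⟩
      · have hxA := (h.isFillingBlock A hA S hS).footprint_subset (proj_mem_footprint hx)
        obtain ⟨i, hiA⟩ := (h.isResolutionAt.exists_mem_iff A).2 ⟨hA, hxA⟩
        obtain ⟨j, hj⟩ := ((h.isLocalFilling A hA hxA).exists_mem_iff S).2 ⟨hS, hx⟩
        exact ⟨_, .inr ⟨i, j, rfl, A, hiA, hj⟩⟩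
  index_unique := by
    rintro S c c' (⟨rfl, -, a, rfl⟩ | ⟨i, j, rfl, A, hA, hS⟩) hc'
    · obtain ⟨rfl, -⟩ | ⟨i', j', -, B, hB, hS'⟩ := hc'
      · rfl
      · exact absurd hS' (h.groupBlock_notMem hB a)
    · obtain ⟨-, -, a, rfl⟩ | ⟨i', j', rfl, B, hB, hS'⟩ := hc'
      · exact absurd hS (h.groupBlock_notMem hA a)
      · obtain ⟨rfl, rfl⟩ := h.colour_unique hA hS hB hS'
        rfl
  existsUnique_mem c y hy := by
    obtain _ | ⟨i, j⟩ := c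
    · by_cases hnone : none ∈ footprint {x, y}
      · exact h.existsUnique_mem_none_of_none_mem hy hnone
      · exact h.existsUnique_mem_none_of_none_notMem hy hnone
    · exact h.existsUnique_mem_some i j hy

end IsFilledResolution

theorem isRDSOn_composite [Nontrivial W] [Finite κ] (h𝒞 : IsRDSOn 3 k 𝒞)
    (hN : ∀ A ∈ 𝒞, IsFilling κ (Fintype.card W + 1) A (N A)) :
    IsRDSOn 3 (Fintype.card W + 1) (composite 𝒞 N) where
  card_eq := by
    rintro S (⟨a, rfl⟩ | ⟨A, hA, hS⟩)
    · exact card_groupBlock a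
    · exact ((hN A hA).isFillingBlock S hS).card_eq
  existsUnique_block _ hT := existsUnique_mem_composite h𝒞 hN hT
  resolvable x := by
    obtain ⟨r, R, hR⟩ := h𝒞.resolvable (proj x)
    choose! L hL using fun A hA => (hN A hA).exists_local x
    exact IsResolutionAt.exists_fin (IsFilledResolution.isResolutionAt_composite
      ⟨h𝒞.existsUnique_block, hR, fun A hA => (hN A hA).isFillingBlock, hL⟩)

end Fillings

section Transport

variable {V W V' W' κ : Type*} {e : V ↪ V'} {f : W ≃ W'} {A : Finset (Option V)}

theorem none_mem_map_iff : none ∈ A.map e.optionMap ↔ none ∈ A := mem_map' e.optionMap (a := none)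

theorem existsUnique_mem_image_map {α β : Type*} {φ : α ↪ β} {L : Set (Finset α)} {y : α}
    (h : ∃! S, S ∈ L ∧ y ∈ S) : ∃! S, S ∈ Finset.map φ '' L ∧ φ y ∈ S := by
  obtain ⟨S, ⟨hS, hy⟩, hunique⟩ := h
  refine ⟨S.map φ, ⟨⟨S, hS, rfl⟩, mem_map_of_mem φ hy⟩, ?_⟩
  rintro _ ⟨⟨S', hS', rfl⟩, hy'⟩
  rw [hunique S' ⟨hS', (mem_map' _).1 hy'⟩]

theorem existsUnique_subset_image_map {α β ι : Type*} {φ : α ↪ β} {L : ι → Set (Finset α)}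
    {T : Finset α} (h : ∃! p : ι × Finset α, p.2 ∈ L p.1 ∧ T ⊆ p.2) :
    ∃! p : ι × Finset β, p.2 ∈ Finset.map φ '' L p.1 ∧ T.map φ ⊆ p.2 := by
  obtain ⟨⟨c, S⟩, ⟨hS, hTS⟩, hunique⟩ := h
  refine ⟨(c, S.map φ), ⟨⟨S, hS, rfl⟩, map_subset_map.2 hTS⟩, ?_⟩
  rintro ⟨c', _⟩ ⟨⟨S', hS', rfl⟩, hTS'⟩
  obtain ⟨rfl, rfl⟩ := Prod.mk.inj (hunique (c', S') ⟨hS', map_subset_map.1 hTS'⟩)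
  rfl

variable [DecidableEq V] [DecidableEq V']

variable (f) in
theorem exists_map_lift_eq {T' : Finset (Option (V' × W'))}
    (h : footprint T' ⊆ A.map e.optionMap) :
    ∃ T : Finset (Option (V × W)), T.map (lift e f) = T' ∧ footprint T ⊆ A := by
  obtain ⟨T, rfl⟩ : ∃ T : Finset (Option (V × W)), T.map (lift e f) = T' := by
    refine ⟨T'.preimage _ (lift e f).injective.injOn, ?_⟩
    ext y
    simp only [mem_map, mem_preimage]
    refine ⟨fun ⟨_, hx, hxy⟩ => hxy ▸ hx, fun hy => ?_⟩
    obtain ⟨a, -, ha⟩ := mem_map.1 (h (proj_mem_footprint hy))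
    obtain ⟨x, rfl⟩ := exists_lift_eq e f ha
    exact ⟨x, hy, rfl⟩
  rw [footprint_map, map_subset_map] at h
  exact ⟨T, rfl, h⟩

variable (e f)

theorem IsFillingBlock.map {k : ℕ} {S : Finset (Option (V × W))} (h : IsFillingBlock k A S) :
    IsFillingBlock k (A.map e.optionMap) (S.map (lift e f)) where
  card_eq := by rw [card_map, h.card_eq]
  footprint_subset := by
    rw [footprint_map]
    exact map_subset_map.2 h.footprint_subset
  card_footprint T' hT' hcard := by
    obtain ⟨T, hT, rfl⟩ := subset_map_iff.1 hT'
    rw [card_map] at hcard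
    rw [footprint_map, card_map, h.card_footprint T hT hcard]

variable [DecidableEq W] [DecidableEq W']

theorem footprint_pair_lift (x y : Option (V × W)) :
    footprint {lift e f x, lift e f y} = (footprint {x, y}).map e.optionMap := by
  rw [← footprint_map e f, map_insert, map_singleton]

variable {e} in
theorem exists_lift_eq_of_footprint_subset {x : Option (V × W)} {y' : Option (V' × W')}
    (hy' : y' ≠ lift e f x) (hA : footprint {lift e f x, y'} ⊆ A.map e.optionMap) :
    ∃ y ≠ x, lift e f y = y' ∧ footprint {x, y} ⊆ A := by
  obtain ⟨a, -, ha⟩ := mem_map.1 (hA (proj_mem_footprint (by simp : y' ∈ _)))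
  obtain ⟨y, rfl⟩ := exists_lift_eq e f ha
  rw [footprint_pair_lift, map_subset_map] at hA
  exact ⟨y, fun hyx => hy' (congrArg _ hyx), rfl, hA⟩

theorem IsLocalFilling.map {N : Set (Finset (Option (V × W)))} {x : Option (V × W)}
    {L : Option κ → Set (Finset (Option (V × W)))} (h : IsLocalFilling N A x L) :
    IsLocalFilling (Finset.map (lift e f) '' N) (A.map e.optionMap) (lift e f x)
      fun c => Finset.map (lift e f) '' L c := by
  constructor
  case exists_mem_iff =>
    intro S'
    constructor
    · rintro ⟨c, S, hS, rfl⟩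
      obtain ⟨hSN, hxS⟩ := (h.exists_mem_iff S).1 ⟨c, hS⟩
      exact ⟨⟨S, hSN, rfl⟩, mem_map_of_mem _ hxS⟩
    · rintro ⟨⟨S, hS, rfl⟩, hx⟩
      obtain ⟨c, hc⟩ := (h.exists_mem_iff S).2 ⟨hS, (mem_map' _).1 hx⟩
      exact ⟨c, S, hc, rfl⟩
  case existsUnique_triple =>
    intro T' hx hT hT3 hTA
    obtain ⟨T, rfl, hTA'⟩ := exists_map_lift_eq f hTA
    rw [card_map] at hT
    rw [footprint_map, card_map] at hT3
    exact existsUnique_subset_image_map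
      (h.existsUnique_triple T ((mem_map' _).1 hx) hT hT3 hTA')
  case existsUnique_some =>
    intro j y' hy' hA
    obtain ⟨y, hyx, rfl, hyA⟩ := exists_lift_eq_of_footprint_subset f hy' hA
    exact existsUnique_mem_image_map (h.existsUnique_some j y hyx hyA)
  case existsUnique_none =>
    intro y' hy' hA hnoneA hnone
    obtain ⟨y, hyx, rfl, hyA⟩ := exists_lift_eq_of_footprint_subset f hy' hA
    rw [footprint_pair_lift, none_mem_map_iff] at hnone
    exact existsUnique_mem_image_map
      (h.existsUnique_none y hyx hyA (none_mem_map_iff.1 hnoneA) hnone)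
  case none_mem =>
    rintro _ ⟨S, hS, rfl⟩
    exact none_mem_map_iff.2 (h.none_mem S hS)
  case none_notMem =>
    rintro _ ⟨S, hS, rfl⟩ y' hy' hyx
    obtain ⟨y, hy, rfl⟩ := mem_map.1 hy'
    rw [footprint_pair_lift, none_mem_map_iff]
    exact h.none_notMem S hS y hy (ne_of_apply_ne _ hyx)

theorem IsFilling.map {k : ℕ} {N : Set (Finset (Option (V × W)))} (h : IsFilling κ k A N) :
    IsFilling κ k (A.map e.optionMap) (Finset.map (lift e f) '' N) where
  isFillingBlock := by
    rintro _ ⟨S, hS, rfl⟩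
    exact (h.isFillingBlock S hS).map e f
  exists_local x' hx' := by
    obtain ⟨a, -, hax⟩ := mem_map.1 hx'
    obtain ⟨x, rfl⟩ := exists_lift_eq e f hax
    rw [proj_lift, mem_map'] at hx'
    obtain ⟨L, hL⟩ := h.exists_local x hx'
    exact ⟨_, hL.map e f⟩

end Transport

section ColouredLinks

variable {V W κ : Type*}

/-- The blocks of colour `c` in a list of coloured blocks, themselves given as lists of points. -/
def blocksOfColour {α : Type*} [DecidableEq α] (D : List (Option κ × List α)) (c : Option κ) :
    Set (Finset α) :=
  {S | ∃ t, (c, t) ∈ D ∧ t.toFinset = S}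

theorem existsUnique_of_countP_eq_one {α : Type*} {l : List α} {P : α → Prop} [DecidablePred P]
    (h : l.countP P = 1) : ∃! a, a ∈ l ∧ P a := by
  rw [List.countP_eq_length_filter, List.length_eq_one_iff] at h
  obtain ⟨a, ha⟩ := h
  have hmem (b : α) : (b ∈ l ∧ P b) ↔ b = a := by
    rw [← List.mem_singleton, ← ha, List.mem_filter, decide_eq_true_iff]
  exact ⟨a, (hmem a).2 rfl, fun b => (hmem b).1⟩

theorem existsUnique_mem_blocksOfColour {α : Type*} [DecidableEq α]
    {D : List (Option κ × List α)} {c : Option κ} {y : α}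
    (h : ∃! p, p ∈ D ∧ p.1 = c ∧ y ∈ p.2) : ∃! S, S ∈ blocksOfColour D c ∧ y ∈ S := by
  obtain ⟨⟨_, t⟩, ⟨ht, rfl, hy⟩, hunique⟩ := h
  refine ⟨t.toFinset, ⟨⟨t, ht, rfl⟩, List.mem_toFinset.2 hy⟩, ?_⟩
  rintro _ ⟨⟨t', ht', rfl⟩, hy'⟩
  rw [Prod.mk.inj (hunique (_, t') ⟨ht', rfl, List.mem_toFinset.1 hy'⟩) |>.2]

variable [DecidableEq V] [DecidableEq W] {A : Finset (Option V)} {x : Option (V × W)}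
  {D : List (Option κ × List (Option (V × W)))}

/-- A list of coloured blocks through `x` with the counting properties that a local filling at `x`
has to satisfy, in a form suited to evaluation. -/
structure IsColouredLink [DecidableEq κ] (A : Finset (Option V)) (x : Option (V × W))
    (D : List (Option κ × List (Option (V × W)))) : Prop where
  mem : ∀ p ∈ D, x ∈ p.2
  countP_triple : ∀ y z, #{x, y, z} = 3 → #(footprint {x, y, z}) = 3 → footprint {x, y, z} ⊆ A →
    D.countP (fun p => y ∈ p.2 ∧ z ∈ p.2) = 1
  countP_some : ∀ j, ∀ y ≠ x, footprint {x, y} ⊆ A →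
    D.countP (fun p => p.1 = some j ∧ y ∈ p.2) = 1
  countP_none : ∀ y ≠ x, footprint {x, y} ⊆ A → none ∈ A → none ∉ footprint {x, y} →
    D.countP (fun p => p.1 = none ∧ y ∈ p.2) = 1
  none_mem : ∀ p ∈ D, p.1 = none → none ∈ A
  none_notMem : ∀ p ∈ D, p.1 = none → ∀ y ∈ p.2, y ≠ x → none ∉ footprint {x, y}

theorem IsColouredLink.isLocalFilling [DecidableEq κ] {N : Set (Finset (Option (V × W)))}
    (h : IsColouredLink A x D) (hN : ∀ S, (∃ p ∈ D, p.2.toFinset = S) ↔ S ∈ N ∧ x ∈ S) :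
    IsLocalFilling N A x (blocksOfColour D) where
  exists_mem_iff S := by
    rw [← hN S]
    exact ⟨fun ⟨c, t, ht⟩ => ⟨(c, t), ht⟩, fun ⟨⟨c, t⟩, ht⟩ => ⟨c, t, ht⟩⟩
  existsUnique_triple T hx hT hT3 hTA := by
    obtain ⟨y, z, -, hyz⟩ := card_eq_two.1 ((card_erase_of_mem hx).trans (congrArg (· - 1) hT))
    obtain rfl : {x, y, z} = T := by rw [← hyz, insert_erase hx]
    have hsubset (p) (hp : p ∈ D) : {x, y, z} ⊆ p.2.toFinset ↔ y ∈ p.2 ∧ z ∈ p.2 := by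
      simp [insert_subset_iff, h.mem p hp]
    obtain ⟨⟨c, t⟩, ⟨ht, hyzt⟩, hunique⟩ :=
      existsUnique_of_countP_eq_one (h.countP_triple y z hT hT3 hTA)
    refine ⟨(c, t.toFinset), ⟨⟨t, ht, rfl⟩, (hsubset _ ht).2 hyzt⟩, ?_⟩
    rintro ⟨c', _⟩ ⟨⟨t', ht', rfl⟩, hyzt'⟩
    obtain ⟨rfl, rfl⟩ := Prod.mk.inj (hunique (c', t') ⟨ht', (hsubset _ ht').1 hyzt'⟩)
    rfl
  existsUnique_some j y hyx hyA :=
    existsUnique_mem_blocksOfColour (existsUnique_of_countP_eq_one (h.countP_some j y hyx hyA))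
  existsUnique_none y hyx hyA hA hy :=
    existsUnique_mem_blocksOfColour
      (existsUnique_of_countP_eq_one (h.countP_none y hyx hyA hA hy))
  none_mem := fun _ ⟨_, ht, _⟩ => h.none_mem _ ht rfl
  none_notMem := by
    rintro _ ⟨t, ht, rfl⟩ y hy
    exact h.none_notMem _ ht rfl y (List.mem_toFinset.1 hy)

theorem isFillingBlock_four {S : Finset (Option (V × W))} (hS : #S = 4) (hSA : footprint S ⊆ A)
    (h : ∀ x ∈ S, #(footprint (S.erase x)) = 3) : IsFillingBlock 4 A S where
  card_eq := hS
  footprint_subset := hSA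
  card_footprint T hTS hT := by
    obtain ⟨x, hx, hxT⟩ := exists_of_ssubset (hTS.ssubset_of_ne (by rintro rfl; omega))
    have hT' : T = S.erase x := eq_of_subset_of_card_le (subset_erase.2 ⟨hTS, hxT⟩)
      (by rw [card_erase_of_mem hx, hS, hT])
    exact hT' ▸ h x hx

end ColouredLinks

section Translates

variable {V W κ : Type*} [AddCommGroup V] [AddCommGroup W]

/-- The translation by `g` on `{∞} ∪ V × W`, which fixes `∞`. -/
def translationBy (g : V × W) : Option (V × W) ↪ Option (V × W) :=
  lift (Equiv.addLeft g.1).toEmbedding (Equiv.addLeft g.2)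

theorem translationBy_some (g h : V × W) : translationBy g (some h) = some (g + h) := rfl

theorem map_translationBy_add (g h : V × W) (S : Finset (Option (V × W))) :
    S.map (translationBy (g + h)) = (S.map (translationBy h)).map (translationBy g) := by
  rw [map_map]
  congr 1
  ext1 (_ | x)
  · rfl
  · exact congrArg some (add_assoc g h x)

theorem map_translationBy_zero (S : Finset (Option (V × W))) : S.map (translationBy 0) = S := by
  have hzero : translationBy (0 : V × W) = .refl _ := by
    ext1 (_ | x)
    · rfl
    · exact congrArg some (zero_add x)
  rw [hzero, map_refl]

variable [DecidableEq V] [DecidableEq W]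

/-- All translates of the blocks in a list of coloured base blocks. -/
def translates (D : List (Option κ × List (Option (V × W)))) : Set (Finset (Option (V × W))) :=
  {S | ∃ g, ∃ p ∈ D, p.2.toFinset.map (translationBy g) = S}

/-- Every translate of a block of `E` that passes through the origin is contained in a block
of `D`. -/
def TranslatesToOriginIn (E D : List (Option κ × List (Option (V × W)))) : Prop :=
  ∀ p ∈ E, ∀ x ∈ p.2, ∀ g ∈ x, ∃ q ∈ D, p.2.map (translationBy (-g)) ⊆ q.2

variable {A : Finset (Option V)} {D E : List (Option κ × List (Option (V × W)))} {k : ℕ}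

theorem image_map_translationBy_translates (g : V × W) :
    Finset.map (translationBy g) '' translates D = translates D := by
  ext S
  constructor
  · rintro ⟨_, ⟨h, p, hp, rfl⟩, rfl⟩
    exact ⟨g + h, p, hp, map_translationBy_add g h _⟩
  · rintro ⟨h, p, hp, rfl⟩
    refine ⟨_, ⟨-g + h, p, hp, rfl⟩, ?_⟩
    rw [← map_translationBy_add, add_neg_cancel_left]

theorem map_toFinset_eq_of_subset {t u : List (Option (V × W))} {g : V × W}
    (hcard : #u.toFinset = #t.toFinset) (h : t.map (translationBy g) ⊆ u) :
    t.toFinset.map (translationBy g) = u.toFinset := by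
  refine eq_of_subset_of_card_le (fun y hy => ?_) (by rw [card_map, hcard])
  obtain ⟨x, hx, rfl⟩ := mem_map.1 hy
  exact List.mem_toFinset.2 (h (List.mem_map_of_mem (List.mem_toFinset.1 hx)))

theorem exists_toFinset_eq_iff_mem_translates_origin (hmem : ∀ p ∈ D, some 0 ∈ p.2)
    (hcard : ∀ p ∈ D, #p.2.toFinset = k) (hD : TranslatesToOriginIn D D)
    (S : Finset (Option (V × W))) :
    (∃ p ∈ D, p.2.toFinset = S) ↔ S ∈ translates D ∧ some 0 ∈ S := by
  constructor
  · rintro ⟨p, hp, rfl⟩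
    exact ⟨⟨0, p, hp, map_translationBy_zero _⟩, List.mem_toFinset.2 (hmem p hp)⟩
  · rintro ⟨⟨g, p, hp, rfl⟩, hS⟩
    have hg : some (-g) ∈ p.2 := by
      rw [← List.mem_toFinset, ← mem_map' (translationBy g), translationBy_some, add_neg_cancel]
      exact hS
    obtain ⟨q, hq, hpq⟩ := hD p hp _ hg (-g) rfl
    rw [neg_neg] at hpq
    exact ⟨q, hq, (map_toFinset_eq_of_subset ((hcard q hq).trans (hcard p hp).symm) hpq).symm⟩

theorem exists_toFinset_eq_iff_mem_translates_infty (hk : 1 < k) (hmem : ∀ p ∈ E, none ∈ p.2)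
    (hDcard : ∀ p ∈ D, #p.2.toFinset = k) (hEcard : ∀ p ∈ E, #p.2.toFinset = k)
    (hE : TranslatesToOriginIn E D)
    (hD : ∀ p ∈ D, none ∈ p.2 → ∀ g, ∃ q ∈ E, p.2.map (translationBy g) ⊆ q.2)
    (S : Finset (Option (V × W))) :
    (∃ p ∈ E, p.2.toFinset = S) ↔ S ∈ translates D ∧ none ∈ S := by
  constructor
  · rintro ⟨p, hp, rfl⟩
    obtain ⟨_ | g, hg, hne⟩ := exists_mem_ne (hEcard p hp ▸ hk) none
    · exact absurd rfl hne
    obtain ⟨q, hq, hpq⟩ := hE p hp _ (List.mem_toFinset.1 hg) g rfl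
    refine ⟨⟨g, q, hq, ?_⟩, List.mem_toFinset.2 (hmem p hp)⟩
    rw [← map_toFinset_eq_of_subset ((hDcard q hq).trans (hEcard p hp).symm) hpq,
      ← map_translationBy_add, add_neg_cancel, map_translationBy_zero]
  · rintro ⟨⟨g, p, hp, rfl⟩, hS⟩
    have hnone : none ∈ p.2 := List.mem_toFinset.1 ((mem_map' (translationBy g) (a := none)).1 hS)
    obtain ⟨q, hq, hpq⟩ := hD p hp hnone g
    exact ⟨q, hq, (map_toFinset_eq_of_subset ((hEcard q hq).trans (hDcard p hp).symm) hpq).symm⟩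

theorem isFilling_translates [DecidableEq κ]
    (hA : ∀ v, A.map (Equiv.addLeft v).toEmbedding.optionMap = A)
    (hblock : ∀ p ∈ D, IsFillingBlock k A p.2.toFinset) (hlink : IsColouredLink A (some 0) D)
    (hD : TranslatesToOriginIn D D)
    (hinfty : none ∈ A →
      ∃ L : Option κ → Set (Finset (Option (V × W))), IsLocalFilling (translates D) A none L) :
    IsFilling κ k A (translates D) where
  isFillingBlock := by
    rintro _ ⟨g, p, hp, rfl⟩
    have := (hblock p hp).map (Equiv.addLeft g.1).toEmbedding (Equiv.addLeft g.2)
    rwa [hA] at this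
  exists_local
    | none, hx => hinfty hx
    | some g, _ => by
      have horigin := hlink.isLocalFilling (N := translates D)
        (exists_toFinset_eq_iff_mem_translates_origin hlink.mem
          (fun p hp => (hblock p hp).card_eq) hD)
      have htranslated := horigin.map (Equiv.addLeft g.1).toEmbedding (Equiv.addLeft g.2)
      rw [hA] at htranslated
      change IsLocalFilling (Finset.map (translationBy g) '' translates D) A
        (translationBy g (some 0)) _ at htranslated
      rw [image_map_translationBy_translates, translationBy_some, add_zero] at htranslated
      exact ⟨_, htranslated⟩

end Translates

section Models

/-- The colours of the nine parallel classes, followed by that of the partial class. -/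
def colours : List (Option (Fin 9)) := (List.finRange 9).map some ++ [none]

/-- The blocks `{x} ∪ t`, where `t` runs through the classes of triples in a list, coloured by their
class, with points encoded as natural numbers. -/
def colouredBlocks {α : Type*} (decode : ℕ → α) (x : α)
    (classes : List (List (List ℕ))) : List (Option (Fin 9) × List α) :=
  (colours.zip classes).flatMap fun p => p.2.map fun t => (p.1, x :: t.map decode)

/-- The point of `{∞} ∪ ℤ/7 × ℤ/3` encoded by `x < 22`, with `21` for `∞` and the Chinese remainder
theorem for the others. -/
def decode22 (x : ℕ) : Option (Fin 7 × Fin 3) :=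
  if x = 21 then none else some (Fin.ofNat 7 x, Fin.ofNat 3 x)

/-- The point of `(ℤ/2)³ × ℤ/3` encoded by `x < 24`. -/
def decode24 (x : ℕ) : Option ((Fin 2 × Fin 2 × Fin 2) × Fin 3) :=
  some ((Fin.ofNat 2 (x / 3), Fin.ofNat 2 (x / 6), Fin.ofNat 2 (x / 12)), Fin.ofNat 3 x)

/-- The blocks through the origin of a translation-invariant system on `{∞} ∪ ℤ/7 × ℤ/3` that
forms an SQS(22) together with the seven completed groups. The first nine classes are parallel
classes of the derived design; the last one misses exactly the completed group of the origin. -/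
def originBlocks22 : List (Option (Fin 9) × List (Option (Fin 7 × Fin 3))) :=
  colouredBlocks decode22 (some 0)
  [[[1, 7, 12], [2, 8, 11], [3, 4, 19], [5, 9, 13], [6, 10, 15], [14, 18, 20], [16, 17, 21]],
   [[1, 6, 17], [2, 7, 9], [3, 13, 15], [4, 11, 14], [5, 16, 20], [8, 19, 21], [10, 12, 18]],
   [[1, 2, 4], [3, 7, 16], [5, 14, 15], [6, 18, 21], [8, 13, 17], [9, 12, 20], [10, 11, 19]],
   [[1, 5, 21], [2, 15, 18], [3, 11, 12], [4, 6, 7], [8, 10, 20], [9, 14, 17], [13, 16, 19]],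
   [[1, 3, 20], [2, 10, 21], [4, 12, 17], [5, 7, 19], [6, 13, 14], [8, 9, 18], [11, 15, 16]],
   [[1, 16, 18], [2, 12, 13], [3, 10, 14], [4, 20, 21], [5, 11, 17], [6, 9, 19], [7, 8, 15]],
   [[1, 8, 14], [2, 19, 20], [3, 5, 18], [4, 9, 15], [6, 12, 16], [7, 10, 17], [11, 13, 21]],
   [[1, 10, 13], [2, 5, 6], [3, 9, 21], [4, 8, 16], [7, 11, 18], [12, 14, 19], [15, 17, 20]],
   [[1, 9, 11], [2, 14, 16], [3, 6, 8], [4, 5, 10], [7, 13, 20], [12, 15, 21], [17, 18, 19]],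
   [[1, 15, 19], [2, 3, 17], [4, 13, 18], [5, 8, 12], [6, 11, 20], [9, 10, 16]]]

/-- The blocks through `∞` of the system generated by `originBlocks22`, resolved into nine parallel
classes. -/
def inftyBlocks22 : List (Option (Fin 9) × List (Option (Fin 7 × Fin 3))) :=
  colouredBlocks decode22 none
  [[[0, 1, 5], [2, 3, 7], [4, 16, 19], [6, 9, 15], [8, 11, 17], [10, 12, 20], [13, 14, 18]],
   [[0, 2, 10], [1, 9, 20], [3, 15, 18], [4, 7, 13], [5, 8, 14], [6, 17, 19], [11, 12, 16]],
   [[0, 3, 9], [1, 17, 18], [2, 5, 11], [4, 6, 14], [7, 8, 12], [10, 13, 19], [15, 16, 20]],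
   [[0, 4, 20], [1, 3, 11], [2, 18, 19], [5, 7, 15], [6, 8, 16], [9, 10, 14], [12, 13, 17]],
   [[0, 6, 18], [1, 7, 19], [2, 4, 12], [3, 14, 16], [5, 17, 20], [8, 9, 13], [10, 11, 15]],
   [[0, 8, 19], [1, 2, 6], [3, 5, 13], [4, 15, 17], [7, 10, 16], [9, 12, 18], [11, 14, 20]],
   [[0, 11, 13], [1, 4, 10], [2, 8, 20], [3, 6, 12], [5, 16, 18], [7, 9, 17], [14, 15, 19]],
   [[0, 12, 15], [1, 13, 16], [2, 14, 17], [3, 4, 8], [5, 6, 10], [7, 18, 20], [9, 11, 19]],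
   [[0, 16, 17], [1, 12, 14], [2, 13, 15], [3, 19, 20], [4, 5, 9], [6, 7, 11], [8, 10, 18]]]

/-- The blocks through the origin of a translation-invariant system on `(ℤ/2)³ × ℤ/3` that covers
exactly once every triple meeting each group in at most one point. Each class partitions the points
outside the group of the origin. -/
def originBlocks24 :
    List (Option (Fin 9) × List (Option ((Fin 2 × Fin 2 × Fin 2) × Fin 3))) :=
  colouredBlocks decode24 (some 0)
  [[[3, 6, 15], [4, 9, 14], [5, 18, 23], [7, 12, 19], [8, 11, 21], [10, 16, 20], [13, 17, 22]],
   [[3, 7, 16], [4, 19, 21], [5, 9, 13], [6, 10, 22], [8, 14, 18], [11, 15, 20], [12, 17, 23]],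
   [[3, 8, 17], [4, 10, 12], [5, 19, 22], [6, 9, 21], [7, 14, 20], [11, 16, 18], [13, 15, 23]],
   [[3, 9, 12], [4, 6, 16], [5, 20, 21], [7, 13, 18], [8, 10, 23], [11, 17, 19], [14, 15, 22]],
   [[3, 10, 13], [4, 18, 22], [5, 7, 15], [6, 11, 23], [8, 12, 20], [9, 16, 19], [14, 17, 21]],
   [[3, 11, 14], [4, 20, 23], [5, 6, 17], [7, 10, 21], [8, 13, 19], [9, 15, 18], [12, 16, 22]],
   [[3, 18, 21], [4, 7, 17], [5, 11, 12], [6, 13, 20], [8, 9, 22], [10, 15, 19], [14, 16, 23]],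
   [[3, 19, 23], [4, 8, 15], [5, 10, 14], [6, 12, 18], [7, 11, 22], [9, 17, 20], [13, 16, 21]],
   [[3, 20, 22], [4, 11, 13], [5, 8, 16], [6, 14, 19], [7, 9, 23], [10, 17, 18], [12, 15, 21]]]

set_option maxRecDepth 100000 in
theorem isFillingBlock_originBlocks22 :
    ∀ p ∈ originBlocks22, IsFillingBlock 4 univ p.2.toFinset := by
  have hevaluated : ∀ p ∈ originBlocks22,
      #p.2.toFinset = 4 ∧ ∀ x ∈ p.2, #(footprint (p.2.toFinset.erase x)) = 3 := by
    decide +kernel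
  exact fun p hp => isFillingBlock_four (hevaluated p hp).1 (subset_univ _)
    fun x hx => (hevaluated p hp).2 x (List.mem_toFinset.1 hx)

set_option maxRecDepth 100000 in
theorem isColouredLink_originBlocks22 : IsColouredLink univ (some 0) originBlocks22 where
  mem := by decide +kernel
  countP_triple := by decide +kernel
  countP_some := by decide +kernel
  countP_none := by decide +kernel
  none_mem := by decide +kernel
  none_notMem := by decide +kernel

set_option maxRecDepth 100000 in
theorem translatesToOriginIn_originBlocks22 :
    TranslatesToOriginIn originBlocks22 originBlocks22 := by
  unfold TranslatesToOriginIn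
  decide +kernel

set_option maxRecDepth 100000 in
theorem isColouredLink_inftyBlocks22 : IsColouredLink univ none inftyBlocks22 where
  mem := by decide +kernel
  countP_triple := by decide +kernel
  countP_some := by decide +kernel
  countP_none := by decide +kernel
  none_mem := by decide +kernel
  none_notMem := by decide +kernel

set_option maxRecDepth 100000 in
theorem translatesToOriginIn_inftyBlocks22 :
    TranslatesToOriginIn inftyBlocks22 originBlocks22 := by
  unfold TranslatesToOriginIn
  decide +kernel

set_option maxRecDepth 100000 in
theorem card_inftyBlocks22 : ∀ p ∈ inftyBlocks22, #p.2.toFinset = 4 := by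
  decide +kernel

set_option maxRecDepth 100000 in
theorem exists_mem_inftyBlocks22 : ∀ p ∈ originBlocks22, none ∈ p.2 → ∀ g,
    ∃ q ∈ inftyBlocks22, p.2.map (translationBy g) ⊆ q.2 := by
  decide +kernel

theorem isFilling_translates_originBlocks22 :
    IsFilling (Fin 9) 4 univ (translates originBlocks22) := by
  refine isFilling_translates (fun v => ?_) isFillingBlock_originBlocks22
    isColouredLink_originBlocks22 translatesToOriginIn_originBlocks22 fun _ =>
      ⟨_, isColouredLink_inftyBlocks22.isLocalFilling
        (exists_toFinset_eq_iff_mem_translates_infty (by norm_num : 1 < 4)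
          isColouredLink_inftyBlocks22.mem
          (fun p hp => (isFillingBlock_originBlocks22 p hp).card_eq) card_inftyBlocks22
          translatesToOriginIn_inftyBlocks22 exists_mem_inftyBlocks22)⟩
  exact map_univ_equiv (Equiv.addLeft v).optionCongr

set_option maxRecDepth 100000 in
theorem isFillingBlock_originBlocks24 :
    ∀ p ∈ originBlocks24, IsFillingBlock 4 (univ.map .some) p.2.toFinset := by
  have hevaluated : ∀ p ∈ originBlocks24, #p.2.toFinset = 4 ∧
      footprint p.2.toFinset ⊆ univ.map .some ∧
      ∀ x ∈ p.2, #(footprint (p.2.toFinset.erase x)) = 3 := by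
    decide +kernel
  exact fun p hp => isFillingBlock_four (hevaluated p hp).1 (hevaluated p hp).2.1
    fun x hx => (hevaluated p hp).2.2 x (List.mem_toFinset.1 hx)

set_option maxRecDepth 100000 in
theorem isColouredLink_originBlocks24 :
    IsColouredLink (univ.map .some) (some 0) originBlocks24 where
  mem := by decide +kernel
  countP_triple := by decide +kernel
  countP_some := by decide +kernel
  countP_none := by simp
  none_mem := by decide +kernel
  none_notMem := by decide +kernel

set_option maxRecDepth 100000 in
theorem translatesToOriginIn_originBlocks24 :
    TranslatesToOriginIn originBlocks24 originBlocks24 := by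
  unfold TranslatesToOriginIn
  decide +kernel

theorem isFilling_translates_originBlocks24 :
    IsFilling (Fin 9) 4 (univ.map .some) (translates originBlocks24) := by
  refine isFilling_translates (fun v => ?_) isFillingBlock_originBlocks24
    isColouredLink_originBlocks24 translatesToOriginIn_originBlocks24 (by simp)
  rw [map_map]
  change univ.map ((Equiv.addLeft v).toEmbedding.trans .some) = _
  rw [← map_map, map_univ_equiv]

end Models

section Tripling

theorem exists_map_univ_eq {α β : Type*} [Fintype α] {B : Finset β} (h : Fintype.card α = #B) :
    ∃ e : α ↪ β, univ.map e = B := by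
  let e : α ≃ B := Fintype.equivOfCardEq (h.trans (Fintype.card_coe B).symm)
  refine ⟨e.toEmbedding.trans (.subtype _), ?_⟩
  rw [← map_map, map_univ_equiv, univ_eq_attach, attach_map_val]

theorem map_optionMap_insertNone {α β : Type*} (e : α ↪ β) (B : Finset α) :
    (insertNone B).map e.optionMap = insertNone (B.map e) := by
  ext (_ | b) <;> simp

theorem exists_isFilling_of_card_eq_eight {V : Type*} [DecidableEq V] {A : Finset (Option V)}
    (hA : #A = 8) : ∃ N : Set (Finset (Option (V × Fin 3))), IsFilling (Fin 9) 4 A N := by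
  by_cases hnone : none ∈ A
  · have hcard : Fintype.card (Fin 7) = #(eraseNone A) := by
      rw [card_eraseNone_of_mem hnone, hA, Fintype.card_fin]
    obtain ⟨e, he⟩ := exists_map_univ_eq hcard
    have hmap : univ.map e.optionMap = A := by
      change (insertNone univ).map e.optionMap = A
      rw [map_optionMap_insertNone, he, insertNone_eraseNone, insert_eq_of_mem hnone]
    exact ⟨_, hmap ▸ isFilling_translates_originBlocks22.map e (.refl _)⟩
  · have hcard : Fintype.card (Fin 2 × Fin 2 × Fin 2) = #(eraseNone A) := by
      rw [card_eraseNone_of_not_mem hnone, hA]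
      rfl
    obtain ⟨e, he⟩ := exists_map_univ_eq hcard
    have hmap : (univ.map .some).map e.optionMap = A := by
      rw [map_map]
      change univ.map (e.trans .some) = A
      rw [← map_map, he, map_some_eraseNone, erase_eq_of_notMem hnone]
    exact ⟨_, hmap ▸ isFilling_translates_originBlocks24.map e (.refl _)⟩

theorem existsRDSQS_of_isRDSOn_eight {V : Type*} [Fintype V] {𝒞 : Set (Finset (Option V))}
    (h𝒞 : IsRDSOn 3 8 𝒞) :
    ExistsRDSQS (3 * Fintype.card V + 1) := by
  classical
  choose! N hN using fun A hA => exists_isFilling_of_card_eq_eight (h𝒞.card_eq A hA)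
  have hcard : Fintype.card (Option (V × Fin 3)) = 3 * Fintype.card V + 1 := by
    rw [Fintype.card_option, Fintype.card_prod, Fintype.card_fin, mul_comm]
  exact hcard ▸ (isRDSOn_composite h𝒞 hN).existsRDS

theorem isRDSOn_empty_of_card_lt {α : Type*} [Fintype α] {t : ℕ} (k : ℕ) (h : Fintype.card α < t) :
    IsRDSOn t k (∅ : Set (Finset α)) where
  card_eq _ hb := hb.elim
  existsUnique_block T hT := by
    have := card_le_univ T
    omega
  resolvable x := ⟨0, Fin.elim0, ⟨by simp, fun _ i => i.elim0, fun i => i.elim0⟩⟩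

end Tripling

/-- For every nonnegative integer n, there exists an RDSQS(3·7^n + 1). -/
theorem stmt_7 (n : ℕ) : ExistsRDSQS (3 * 7 ^ n + 1) := by
  obtain rfl | hn := eq_or_ne n 0
  · exact existsRDSQS_of_isRDSOn_eight (V := Fin 1) (isRDSOn_empty_of_card_lt 8 (by simp))
  · have : Fact (Nat.Prime 7) := ⟨by norm_num⟩
    classical
    let F := GaloisField 7 n
    have : Fintype F := Fintype.ofFinite F
    have hcard : Fintype.card F = 7 ^ n := by
      rw [← Nat.card_eq_fintype_card, GaloisField.card 7 n hn]
    have hcircles : IsRDSOn 3 (Fintype.card (ZMod 7) + 1) (circleBlocks (algebraMap (ZMod 7) F)) :=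
      isRDSOn_circleBlocks
    rw [ZMod.card] at hcircles
    exact hcard ▸ existsRDSQS_of_isRDSOn_eight hcircles
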